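/- Vanishing of the bottom of the energy form in the massless case (claim 2 of Subsection 1.3): Let a : ℝ³ → Sym(3,ℝ) be measurable with C₀‖ξ‖² ≤ ξ·a(x)ξ ≤ C₁‖ξ‖² for all x, ξ and some 0 < C₀ ≤ C₁; let c : ℝ³ → ℝ be C¹ with C₀ ≤ c(x) ≤ C₁ and bounded gradient; let m : ℝ³ → ℝ be bounded measurable with m(x) → 0 as ‖x‖ → ∞. Then for every ε > 0 there exists a smooth compactly supported f : ℝ³ → ℝ with ∫ f² dx = 1 such that ∫_{ℝ³} ⟨∇(f/c)(x), a(x)∇(f/c)(x)⟩ + m(x)² f(x)² dx < ε. -/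

import Mathlib

open MeasureTheory Filter

/-- The quadratic form `ξ ↦ ξ · M(x) ξ` associated to a matrix-valued function. -/
def qform (M : EuclideanSpace ℝ (Fin 3) → Matrix (Fin 3) (Fin 3) ℝ)
    (x ξ : EuclideanSpace ℝ (Fin 3)) : ℝ :=
  ∑ i, ∑ j, ξ i * M x i j * ξ j

open scoped Convolution

/-- A compactly supported `C¹` function is approximated in the `C¹` norm by smooth functions
supported in a small neighbourhood of its support. -/
theorem HasCompactSupport.exists_contDiff_C1_approx {E : Type*} [NormedAddCommGroup E]
    [InnerProductSpace ℝ E] [FiniteDimensional ℝ E] [MeasurableSpace E] [BorelSpace E]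
    {g : E → ℝ} (hgs : HasCompactSupport g) (hg : ContDiff ℝ 1 g) {δ : ℝ} (hδ : 0 < δ) :
    ∃ f : E → ℝ, ContDiff ℝ (⊤ : ℕ∞) f ∧
      (∀ x, (∀ y, dist y x < δ → g y = 0) → f x = 0) ∧
      (∀ x, |f x - g x| ≤ δ) ∧ ∀ x, ‖fderiv ℝ f x - fderiv ℝ g x‖ ≤ δ := by
  have hg' : Continuous (fderiv ℝ g) := hg.continuous_fderiv one_ne_zero
  obtain ⟨d₁, hd₁, h₁⟩ := Metric.uniformContinuous_iff.1
    (hgs.uniformContinuous_of_continuous hg.continuous) δ hδ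
  obtain ⟨d₂, hd₂, h₂⟩ := Metric.uniformContinuous_iff.1
    ((hgs.fderiv ℝ).uniformContinuous_of_continuous hg') δ hδ
  have hd : 0 < min δ (min d₁ d₂) := lt_min hδ (lt_min hd₁ hd₂)
  set d := min δ (min d₁ d₂)
  let φ : ContDiffBump (0 : E) := ⟨d / 2, d, half_pos hd, half_lt_self hd⟩
  have hφi : LocallyIntegrable (φ.normed volume) volume :=
    φ.continuous_normed.locallyIntegrable
  have hL : (ContinuousLinearMap.lsmul ℝ ℝ : ℝ →L[ℝ] ℝ →L[ℝ] ℝ).precompR E =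
      (ContinuousLinearMap.lsmul ℝ ℝ : ℝ →L[ℝ] (E →L[ℝ] ℝ) →L[ℝ] (E →L[ℝ] ℝ)) := by
    ext; simp
  refine ⟨φ.normed volume ⋆[ContinuousLinearMap.lsmul ℝ ℝ, volume] g, ?_, ?_, ?_, ?_⟩
  · exact φ.hasCompactSupport_normed.contDiff_convolution_left _ φ.contDiff_normed
      hg.continuous.locallyIntegrable
  · intro x hx
    have hx0 : g x = 0 := hx x (by simpa using hδ)
    rw [φ.normed_convolution_eq_right, hx0]
    intro y hy
    rw [hx0]
    exact hx y (lt_of_lt_of_le hy (min_le_left _ _))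
  · intro x
    rw [← Real.dist_eq]
    refine φ.dist_normed_convolution_le hg.continuous.aestronglyMeasurable fun y hy => ?_
    exact (h₁ (lt_of_lt_of_le hy ((min_le_right _ _).trans (min_le_left _ _)))).le
  · intro x
    rw [(hgs.hasFDerivAt_convolution_right _ hφi hg x).fderiv, hL, ← dist_eq_norm]
    refine φ.dist_normed_convolution_le hg'.aestronglyMeasurable fun y hy => ?_
    exact (h₂ (lt_of_lt_of_le hy ((min_le_right _ _).trans (min_le_right _ _)))).le

theorem norm_gradient {E : Type*} [NormedAddCommGroup E] [InnerProductSpace ℝ E]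
    [CompleteSpace E] (f : E → ℝ) (x : E) : ‖gradient f x‖ = ‖fderiv ℝ f x‖ := by
  rw [gradient, LinearIsometryEquiv.norm_map]

/-- For a perturbation `r` of `c * ψ`, the derivative of the quotient by `c` is close to that
of `ψ`. -/
theorem norm_fderiv_div_le {E : Type*} [NormedAddCommGroup E] [NormedSpace ℝ E]
    {f c ψ : E → ℝ} {x : E} {C M δ κ : ℝ} (hC : 0 < C)
    (hf : DifferentiableAt ℝ f x) (hc : Differentiable ℝ c) (hψ : DifferentiableAt ℝ ψ x)
    (hcC : ∀ y, C ≤ c y) (hcM : ‖fderiv ℝ c x‖ ≤ M) (hψκ : ‖fderiv ℝ ψ x‖ ≤ κ)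
    (h₀ : |f x - c x * ψ x| ≤ δ)
    (h₁ : ‖fderiv ℝ f x - fderiv ℝ (fun y => c y * ψ y) x‖ ≤ δ) :
    ‖fderiv ℝ (fun y => f y / c y) x‖ ≤ κ + δ * (C⁻¹ + M * (C ^ 2)⁻¹) := by
  have hpos : ∀ y, 0 < c y := fun y => hC.trans_le (hcC y)
  have hr : HasFDerivAt (fun y => f y - c y * ψ y)
      (fderiv ℝ f x - fderiv ℝ (fun y => c y * ψ y) x) x :=
    hf.hasFDerivAt.sub ((hc x).mul hψ).hasFDerivAt
  have hinv : HasFDerivAt (fun y => (c y)⁻¹) (-(c x ^ 2)⁻¹ • fderiv ℝ c x) x :=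
    (hasDerivAt_inv (hpos x).ne').comp_hasFDerivAt x (hc x).hasFDerivAt
  have heq : (fun y => f y / c y) = fun y => ψ y + (f y - c y * ψ y) * (c y)⁻¹ := by
    funext y
    have := (hpos y).ne'
    field_simp
    ring
  have hδ : 0 ≤ δ := (abs_nonneg _).trans h₀
  have hinvC : (c x)⁻¹ ≤ C⁻¹ := inv_anti₀ hC (hcC x)
  have hinvC2 : (c x ^ 2)⁻¹ ≤ (C ^ 2)⁻¹ :=
    inv_anti₀ (by positivity) (pow_le_pow_left₀ hC.le (hcC x) 2)
  have hsum : HasFDerivAt (fun y => ψ y + (f y - c y * ψ y) * (c y)⁻¹) _ x :=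
    hψ.hasFDerivAt.add (hr.mul hinv)
  rw [heq, hsum.fderiv]
  refine (norm_add_le _ _).trans (add_le_add hψκ ((norm_add_le _ _).trans ?_))
  rw [norm_smul, norm_smul, norm_smul, Real.norm_eq_abs, Real.norm_eq_abs, Real.norm_eq_abs,
    abs_neg, abs_of_pos (inv_pos.2 (hpos x)), abs_of_pos (inv_pos.2 (pow_pos (hpos x) 2))]
  have e₁ : |f x - c x * ψ x| * ((c x ^ 2)⁻¹ * ‖fderiv ℝ c x‖) ≤ δ * ((C ^ 2)⁻¹ * M) := by
    have := inv_nonneg.2 (pow_nonneg (hpos x).le 2)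
    gcongr
  have e₂ : (c x)⁻¹ * ‖fderiv ℝ f x - fderiv ℝ (fun y => c y * ψ y) x‖ ≤ C⁻¹ * δ := by
    gcongr
  linarith

/-- Smooth cutoffs at scale `R` around an arbitrary centre whose quotient by `c` has small
gradient. -/
theorem exists_smooth_cutoff_div {E : Type*} [NormedAddCommGroup E]
    [InnerProductSpace ℝ E] [FiniteDimensional ℝ E] [MeasurableSpace E] [BorelSpace E]
    {c : E → ℝ} {C₀ C₁ M s : ℝ} (hC₀ : 0 < C₀) (hc : ContDiff ℝ 1 c)
    (hc_bd : ∀ x, C₀ ≤ c x ∧ c x ≤ C₁) (hcM : ∀ x, ‖gradient c x‖ ≤ M) (hs : 0 < s) :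
    ∃ R : ℝ, 0 < R ∧ ∀ x₀ : E, ∃ f : E → ℝ, ContDiff ℝ (⊤ : ℕ∞) f ∧
      (∀ x ∉ Metric.closedBall x₀ (3 * R), f x = 0) ∧ (∀ x, |f x| ≤ C₁ + 1) ∧
      (∀ x ∈ Metric.closedBall x₀ R, C₀ / 2 ≤ f x) ∧
      ∀ x, ‖gradient (fun y => f y / c y) x‖ ≤ s := by
  let χ : ContDiffBump (0 : E) := ⟨1, 2, one_pos, one_lt_two⟩
  have hχd : ContDiff ℝ 1 χ := χ.contDiff
  obtain ⟨K, hK⟩ := (χ.hasCompactSupport.fderiv ℝ).exists_bound_of_continuous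
    (hχd.continuous_fderiv one_ne_zero)
  have hK0 : 0 ≤ K := (norm_nonneg _).trans (hK 0)
  have hM0 : 0 ≤ M := (norm_nonneg _).trans (hcM 0)
  have hC₁ : 0 < C₁ := hC₀.trans_le ((hc_bd 0).1.trans (hc_bd 0).2)
  set R : ℝ := 1 + 2 * K / s with hR
  have hR1 : 1 ≤ R := le_add_of_nonneg_right (by positivity)
  have hR0 : 0 < R := one_pos.trans_le hR1
  have hKR : K * R⁻¹ ≤ s / 2 := by
    rw [← div_eq_mul_inv, div_le_iff₀ hR0, hR]
    field_simp
    linarith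
  set A : ℝ := C₀⁻¹ + M * (C₀ ^ 2)⁻¹
  have hA0 : 0 < A := by positivity
  set δ : ℝ := min 1 (min (C₀ / 2) (s / 2 / A))
  have hδ0 : 0 < δ := by positivity
  have hδ1 : δ ≤ 1 := min_le_left _ _
  have hδC : δ ≤ C₀ / 2 := (min_le_right _ _).trans (min_le_left _ _)
  have hδA : δ * A ≤ s / 2 :=
    (le_div_iff₀ hA0).1 ((min_le_right _ _).trans (min_le_right _ _))
  refine ⟨R, hR0, fun x₀ => ?_⟩
  let ψ : E → ℝ := fun x => χ (R⁻¹ • (x - x₀))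
  have hψd : ContDiff ℝ 1 ψ := hχd.comp (by fun_prop)
  have hψK : ∀ x, ‖fderiv ℝ ψ x‖ ≤ s / 2 := by
    intro x
    have h1 : HasFDerivAt (fun x : E => R⁻¹ • (x - x₀))
        (R⁻¹ • ContinuousLinearMap.id ℝ E) x :=
      ((hasFDerivAt_id x).sub_const x₀).const_smul R⁻¹
    have h2 : HasFDerivAt ψ _ x :=
      ((hχd.differentiable one_ne_zero _).hasFDerivAt).comp x h1
    rw [h2.fderiv, ContinuousLinearMap.comp_smul, ContinuousLinearMap.comp_id, norm_smul,
      Real.norm_eq_abs, abs_of_pos (inv_pos.2 hR0), mul_comm]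
    exact (mul_le_mul_of_nonneg_right (hK _) (inv_pos.2 hR0).le).trans hKR
  have hnorm : ∀ x, ‖R⁻¹ • (x - x₀)‖ = dist x x₀ / R := by
    intro x
    rw [norm_smul, Real.norm_eq_abs, abs_of_pos (inv_pos.2 hR0), dist_eq_norm]
    ring
  have hψ0 : ∀ x, 2 * R ≤ dist x x₀ → ψ x = 0 := by
    intro x hx
    refine χ.zero_of_le_dist ?_
    rw [dist_zero_right, hnorm]
    exact (le_div_iff₀ hR0).2 hx
  have hψ1 : ∀ x ∈ Metric.closedBall x₀ R, ψ x = 1 := by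
    intro x hx
    refine χ.one_of_mem_closedBall ?_
    rw [Metric.mem_closedBall, dist_zero_right, hnorm]
    exact (div_le_one hR0).2 hx
  have hgs : HasCompactSupport fun y => c y * ψ y := by
    refine HasCompactSupport.intro (isCompact_closedBall x₀ (2 * R)) fun x hx => ?_
    rw [hψ0 x (not_le.1 hx).le, mul_zero]
  obtain ⟨f, hf, hfs, hf0, hf1⟩ := hgs.exists_contDiff_C1_approx (hc.mul hψd) hδ0
  refine ⟨f, hf, fun x hx => hfs x fun y hy => ?_, fun x => ?_, fun x hx => ?_, fun x => ?_⟩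
  · have hx' : 3 * R < dist x x₀ := not_le.1 hx
    have := dist_triangle_left x x₀ y
    rw [hψ0 y (by linarith), mul_zero]
  · have h1 : |c x * ψ x| ≤ C₁ := by
      have hψ : 0 ≤ ψ x ∧ ψ x ≤ 1 := ⟨χ.nonneg, χ.le_one⟩
      have := hc_bd x
      rw [abs_of_nonneg (mul_nonneg (hC₀.le.trans this.1) hψ.1)]
      exact (mul_le_of_le_one_right (hC₀.le.trans this.1) hψ.2).trans this.2
    have := abs_sub_abs_le_abs_sub (f x) (c x * ψ x)
    linarith [hf0 x]
  · have := (abs_le.1 (hf0 x)).1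
    rw [hψ1 x hx] at this
    linarith [(hc_bd x).1]
  · rw [norm_gradient]
    refine (norm_fderiv_div_le hC₀ (hf.differentiable (by simp) x)
      (hc.differentiable one_ne_zero) (hψd.differentiable one_ne_zero x) (fun y => (hc_bd y).1)
      ((norm_gradient c x).symm.le.trans (hcM x)) (hψK x) (hf0 x) (hf1 x)).trans ?_
    linarith

theorem qform_smul (M : EuclideanSpace ℝ (Fin 3) → Matrix (Fin 3) (Fin 3) ℝ)
    (x ξ : EuclideanSpace ℝ (Fin 3)) (k : ℝ) : qform M x (k • ξ) = k ^ 2 * qform M x ξ := by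
  simp only [qform, Finset.mul_sum, PiLp.smul_apply, smul_eq_mul]
  refine Finset.sum_congr rfl fun i _ => Finset.sum_congr rfl fun j _ => ?_
  ring

/-- A trial function whose energy is less than `ε` times its squared norm can be normalized. -/
theorem exists_normalized_energy_lt
    {a : EuclideanSpace ℝ (Fin 3) → Matrix (Fin 3) (Fin 3) ℝ}
    {c m f : EuclideanSpace ℝ (Fin 3) → ℝ} {ε : ℝ}
    (hf : ContDiff ℝ (⊤ : ℕ∞) f) (hfs : HasCompactSupport f)
    (hpos : 0 < ∫ x, f x ^ 2) (hc : ∀ x, DifferentiableAt ℝ (fun y => f y / c y) x)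
    (hlt : (∫ x, qform a x (gradient (fun y => f y / c y) x) + m x ^ 2 * f x ^ 2) <
      ε * ∫ x, f x ^ 2) :
    ∃ f : EuclideanSpace ℝ (Fin 3) → ℝ,
      ContDiff ℝ (⊤ : ℕ∞) f ∧ HasCompactSupport f ∧ (∫ x, (f x) ^ 2) = 1 ∧
      (∫ x, qform a x (gradient (fun y => f y / c y) x) + (m x) ^ 2 * (f x) ^ 2) < ε := by
  set I := ∫ x, f x ^ 2
  have hk : ((√I)⁻¹) ^ 2 = I⁻¹ := by rw [inv_pow, Real.sq_sqrt hpos.le]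
  refine ⟨fun x => (√I)⁻¹ * f x, contDiff_const.mul hf, hfs.mul_left, ?_, ?_⟩
  · simp_rw [mul_pow, integral_const_mul, hk]
    exact inv_mul_cancel₀ hpos.ne'
  · have hgrad : ∀ x, gradient (fun y => (√I)⁻¹ * f y / c y) x =
        (√I)⁻¹ • gradient (fun y => f y / c y) x := by
      intro x
      simp_rw [gradient, mul_div_assoc, fderiv_const_mul (hc x)]
      exact map_smul (InnerProductSpace.toDual ℝ _).symm.toLinearEquiv.toLinearMap _ _
    have : ∀ x, qform a x (gradient (fun y => (√I)⁻¹ * f y / c y) x) +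
        m x ^ 2 * ((√I)⁻¹ * f x) ^ 2 =
        I⁻¹ * (qform a x (gradient (fun y => f y / c y) x) + m x ^ 2 * f x ^ 2) := by
      intro x
      rw [hgrad, qform_smul, mul_pow, hk]
      ring
    simp_rw [this, integral_const_mul]
    rwa [inv_mul_lt_iff₀ hpos, mul_comm]

/-- Vanishing of the bottom of the energy form in the massless case (claim 2 of
Subsection 1.3): if the variable boson mass `m(x)` tends to `0` at infinity, then
for every `ε > 0` there is a normalized smooth compactly supported `f` with
`∫ ⟨∇(f/c), a ∇(f/c)⟩ + m² f² dx < ε`; i.e. `inf σ(h) = 0`. -/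
theorem energy_form_inf_zero_massless
    (a : EuclideanSpace ℝ (Fin 3) → Matrix (Fin 3) (Fin 3) ℝ)
    (c m : EuclideanSpace ℝ (Fin 3) → ℝ)
    (C₀ C₁ : ℝ) (hC₀ : 0 < C₀) (hC₀₁ : C₀ ≤ C₁)
    (ha_symm : ∀ x, (a x).IsSymm)
    (ha_meas : ∀ i j, Measurable fun x => a x i j)
    (ha_ell : ∀ x ξ : EuclideanSpace ℝ (Fin 3),
      C₀ * ‖ξ‖ ^ 2 ≤ qform a x ξ ∧ qform a x ξ ≤ C₁ * ‖ξ‖ ^ 2)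
    (hc : ContDiff ℝ 1 c) (hc_bd : ∀ x, C₀ ≤ c x ∧ c x ≤ C₁)
    (hc_grad : ∃ M : ℝ, ∀ x, ‖gradient c x‖ ≤ M)
    (hm_meas : Measurable m) (hm_bd : ∃ M : ℝ, ∀ x, |m x| ≤ M)
    (hm_zero : Tendsto m (cocompact (EuclideanSpace ℝ (Fin 3))) (nhds 0)) :
    ∀ ε : ℝ, 0 < ε →
      ∃ f : EuclideanSpace ℝ (Fin 3) → ℝ,
        ContDiff ℝ (⊤ : ℕ∞) f ∧ HasCompactSupport f ∧
        (∫ x, (f x) ^ 2) = 1 ∧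
        (∫ x, qform a x (gradient (fun y => f y / c y) x) + (m x) ^ 2 * (f x) ^ 2) < ε := by
  intro ε hε
  obtain ⟨M, hM⟩ := hc_grad
  have hC₁ : 0 < C₁ := hC₀.trans_le hC₀₁
  set κ : ℝ := ε * (C₀ / 2) ^ 2 / 27 with hκ
  have hκ0 : 0 < κ := by positivity
  obtain ⟨s, hs, hsκ⟩ : ∃ s : ℝ, 0 < s ∧ C₁ * s ^ 2 < κ / 2 := by
    refine ⟨√(κ / (4 * C₁)), by positivity, ?_⟩
    rw [Real.sq_sqrt (by positivity)]
    field_simp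
    norm_num
  obtain ⟨η, hη, hηκ⟩ : ∃ η : ℝ, 0 < η ∧ η ^ 2 * (C₁ + 1) ^ 2 = κ / 2 := by
    refine ⟨√(κ / (2 * (C₁ + 1) ^ 2)), by positivity, ?_⟩
    rw [Real.sq_sqrt (by positivity)]
    field_simp
  obtain ⟨R, hR, hcut⟩ := exists_smooth_cutoff_div hC₀ hc hc_bd hM hs
  have hm_ev : ∀ᶠ x in cocompact (EuclideanSpace ℝ (Fin 3)), |m x| < η := by
    simpa [Real.dist_eq] using hm_zero.eventually (Metric.ball_mem_nhds 0 hη)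
  obtain ⟨T, hT⟩ : ∃ T : ℝ, ∀ x : EuclideanSpace ℝ (Fin 3), T ≤ ‖x‖ → |m x| < η := by
    rw [← Metric.cobounded_eq_cocompact, ← comap_norm_atTop, eventually_comap] at hm_ev
    obtain ⟨T, hT⟩ := eventually_atTop.1 hm_ev
    exact ⟨T, fun x hx => hT _ hx x rfl⟩
  obtain ⟨x₀, hx₀⟩ := NormedSpace.exists_lt_norm ℝ (EuclideanSpace ℝ (Fin 3)) (T + 3 * R)
  obtain ⟨f, hf, hfs, hfb, hfl, hfg⟩ := hcut x₀
  have hfc : HasCompactSupport f := HasCompactSupport.intro (isCompact_closedBall _ _) hfs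
  set v := volume.real (Metric.ball (0 : EuclideanSpace ℝ (Fin 3)) 1)
  have hv0 : 0 < v :=
    ENNReal.toReal_pos (Metric.measure_ball_pos _ _ one_pos).ne' measure_ball_lt_top.ne
  have hvol : ∀ r : ℝ, 0 ≤ r → volume.real (Metric.closedBall x₀ r) = r ^ 3 * v := by
    intro r hr
    rw [Measure.addHaar_real_closedBall _ _ hr, finrank_euclideanSpace, Fintype.card_fin]
  have hfin : ∀ r : ℝ, volume (Metric.closedBall x₀ r) ≠ ⊤ := fun r =>
    measure_closedBall_lt_top.ne
  have hind : ∀ r k : ℝ, 0 ≤ r →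
      (∫ x, (Metric.closedBall x₀ r).indicator (fun _ => k) x) = k * (r ^ 3 * v) := by
    intro r k hr
    rw [integral_indicator Metric.isClosed_closedBall.measurableSet, setIntegral_const,
      hvol r hr, smul_eq_mul, mul_comm]
  have hindi : ∀ r k : ℝ, Integrable ((Metric.closedBall x₀ r).indicator fun _ => k) :=
    fun r k => (integrable_indicator_iff Metric.isClosed_closedBall.measurableSet).2
      (integrableOn_const (hfin r))
  have hmass : (C₀ / 2) ^ 2 * (R ^ 3 * v) ≤ ∫ x, f x ^ 2 := by
    rw [← hind R _ hR.le]
    have hint : Integrable fun x => f x ^ 2 :=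
      (hf.continuous.pow 2).integrable_of_hasCompactSupport
        (HasCompactSupport.intro hfc fun x hx => by
          simp [image_eq_zero_of_notMem_tsupport hx])
    refine integral_mono (hindi _ _) hint fun x => ?_
    refine Set.indicator_apply_le' (fun hx => ?_) fun _ => sq_nonneg _
    exact pow_le_pow_left₀ (by positivity) (hfl x hx) 2
  have henergy : (∫ x, qform a x (gradient (fun y => f y / c y) x) + m x ^ 2 * f x ^ 2) ≤
      (C₁ * s ^ 2 + κ / 2) * ((3 * R) ^ 3 * v) := by
    rw [← hind _ _ (by positivity)]
    refine integral_mono_of_nonneg (Eventually.of_forall fun x => ?_) (hindi _ _)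
      (Eventually.of_forall fun x => ?_)
    · exact add_nonneg ((by positivity : 0 ≤ C₀ * _).trans (ha_ell x _).1) (by positivity)
    · refine Set.le_indicator_apply (fun hx => ?_) fun hx => ?_
      · have hmx : |m x| ≤ η := by
          refine (hT x ?_).le
          have h1 : dist x x₀ ≤ 3 * R := hx
          have h2 := norm_sub_norm_le x₀ x
          rw [← dist_eq_norm, dist_comm] at h2
          linarith
        have h1 : m x ^ 2 * f x ^ 2 ≤ κ / 2 := by
          rw [← hηκ, ← sq_abs (m x), ← sq_abs (f x)]
          gcongr
          exact hfb x
        have h2 := (ha_ell x (gradient (fun y => f y / c y) x)).2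
        have h3 : C₁ * ‖gradient (fun y => f y / c y) x‖ ^ 2 ≤ C₁ * s ^ 2 := by
          gcongr
          exact hfg x
        linarith
      · have hg0 : gradient (fun y => f y / c y) x = 0 := by
          have : (fun y => f y / c y) =ᶠ[nhds x] fun _ => 0 := by
            filter_upwards [Metric.isClosed_closedBall.isOpen_compl.mem_nhds hx] with y hy
            rw [hfs y hy, zero_div]
          rw [← norm_eq_zero, norm_gradient, this.fderiv_eq]
          simp
        have : f x = 0 := hfs x hx
        simp [hg0, this, qform]
  refine exists_normalized_energy_lt hf hfc
    (lt_of_lt_of_le (by positivity) hmass) (fun x => ?_) ?_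
  · simp_rw [div_eq_mul_inv]
    exact (hf.differentiable (by simp) x).mul ((hc.differentiable one_ne_zero x).inv
      (hC₀.trans_le (hc_bd x).1).ne')
  · calc _ ≤ _ := henergy
      _ < κ * ((3 * R) ^ 3 * v) := by gcongr; linarith
      _ = ε * ((C₀ / 2) ^ 2 * (R ^ 3 * v)) := by rw [hκ]; ring
      _ ≤ _ := by gcongr
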